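/- Let C be a closed convex cone in a finite-dimensional real normed vector space V, let α be a continuous antinorm associated with C, and let p ∈ C^∨ be such that p is not identically zero on C. Then α is additive on the cone p^∨: for all u, v ∈ p^∨ one has α(u + v) = α(u) + α(v) (so together with positive homogeneity, α is linear on p^∨). -/

import Mathlib

open Set

variable {V : Type*} [NormedAddCommGroup V] [NormedSpace ℝ V]

/-- `C` is a closed convex cone (containing the origin). -/
def IsClosedConvexCone (C : Set V) : Prop :=
  (0 : V) ∈ C ∧ IsClosed C ∧ Convex ℝ C ∧ ∀ c : ℝ, 0 < c → ∀ x ∈ C, c • x ∈ C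

/-- A cone is salient if it contains no nonzero linear subspace,
equivalently it contains no pair `x, -x` with `x ≠ 0`. -/
def IsSalientCone (C : Set V) : Prop := ∀ x ∈ C, x ≠ 0 → -x ∉ C

/-- The relative boundary of a set: the set minus its relative (intrinsic) interior. -/
def relBoundary (C : Set V) : Set V := C \ intrinsicInterior ℝ C

/-- `a` is an antinorm associated with the cone `C` : it takes values in `ℝ ∪ {-∞}`,
is positive on the relative interior of `C`, vanishes on the relative boundary of `C`,
is `-∞` off `C`, is positively homogeneous and superadditive (concave). -/
def IsAntinorm (C : Set V) (a : V → EReal) : Prop :=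
  (∀ v, a v ≠ ⊤) ∧
  (∀ v ∈ intrinsicInterior ℝ C, 0 < a v) ∧
  (∀ v ∈ relBoundary C, a v = 0) ∧
  (∀ v, v ∉ C → a v = ⊥) ∧
  (∀ c : ℝ, 0 < c → ∀ v, a (c • v) = (c : EReal) * a v) ∧
  (∀ v w, a v + a w ≤ a (v + w))

/-- The negative dual cone `C^∨ = {p : ⟨p,u⟩ ≤ 0 ∀ u ∈ C}`. -/
def negDual (C : Set V) : Set (V →L[ℝ] ℝ) := {p | ∀ u ∈ C, p u ≤ 0}

/-- The antisphere of radius `r`. -/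
def antisphere (a : V → EReal) (r : ℝ) : Set V := {v | a v = (r : EReal)}

/-- The dual function `α^∨(p) = -sup_{v ∈ S₁} ⟨p, v⟩`. -/
noncomputable def dualFn (a : V → EReal) (p : V →L[ℝ] ℝ) : EReal :=
  - sSup ((fun v => ((p v : ℝ) : EReal)) '' antisphere a 1)

/-- `p^∨_r` : the set of maximizers of `v ↦ ⟨p, v⟩` over the antisphere `S_r`. -/
def maxSet (a : V → EReal) (p : V →L[ℝ] ℝ) (r : ℝ) : Set V :=
  {v ∈ antisphere a r | ∀ w ∈ antisphere a r, p w ≤ p v}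

/-- `p^∨ = ⋃_{r ≥ 0} p^∨_r`. -/
def pDual (a : V → EReal) (p : V →L[ℝ] ℝ) : Set V := ⋃ r ∈ Ici (0 : ℝ), maxSet a p r

/-!
For `u ∈ p^∨` and `w ∈ C`, rescaling `w` to the antisphere through `u` gives the reverse
Cauchy–Schwarz type inequality `α(u) ⟨p, w⟩ ≤ α(w) ⟨p, u⟩`. Taking `w = u + v`, and adding the
inequality for `u` to the one for `v`, yields
`(α(u) + α(v)) ⟨p, u + v⟩ ≤ α(u + v) ⟨p, u + v⟩`. If `α(u + v) > 0` then `u + v` lies in `ri C`,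
where `⟨p, ·⟩ < 0`, so dividing by `⟨p, u + v⟩` gives `α(u + v) ≤ α(u) + α(v)`, the converse of
superadditivity.
-/

section IntrinsicInterior

open Topology

variable {𝕜 E P : Type*} [AddCommGroup E] [TopologicalSpace E] [TopologicalSpace P]
  [AddTorsor E P] [IsTopologicalAddTorsor P] {s : Set P} {x y : P}

lemma eventually_lineMap_mem_of_mem_intrinsicInterior [Ring 𝕜] [TopologicalSpace 𝕜] [Module 𝕜 E]
    [ContinuousSMul 𝕜 E] (hy : y ∈ intrinsicInterior 𝕜 s) (hx : x ∈ affineSpan 𝕜 s) :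
    ∀ᶠ t in 𝓝 (0 : 𝕜), AffineMap.lineMap y x t ∈ s := by
  obtain ⟨y, hy, rfl⟩ := hy
  let line (t : 𝕜) : affineSpan 𝕜 s :=
    ⟨AffineMap.lineMap (y : P) x t, AffineMap.lineMap_mem t y.2 hx⟩
  have line_continuous : Continuous line := AffineMap.lineMap_continuous.subtype_mk _
  have line_zero : line 0 = y := Subtype.ext (AffineMap.lineMap_apply_zero _ _)
  have preimage_nhds : ((↑) ⁻¹' s : Set (affineSpan 𝕜 s)) ∈ 𝓝 (line 0) :=
    line_zero ▸ mem_interior_iff_mem_nhds.1 hy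
  exact line_continuous.continuousAt.preimage_mem_nhds preimage_nhds

lemma eq_of_isMaxOn_of_mem_intrinsicInterior [Field 𝕜] [LinearOrder 𝕜] [IsStrictOrderedRing 𝕜]
    [TopologicalSpace 𝕜] [OrderTopology 𝕜] [Module 𝕜 E] [ContinuousSMul 𝕜 E] {f : P →ᵃ[𝕜] 𝕜}
    (hf : IsMaxOn f s y) (hy : y ∈ intrinsicInterior 𝕜 s) (hx : x ∈ s) : f x = f y := by
  have line_mem := eventually_lineMap_mem_of_mem_intrinsicInterior hy (subset_affineSpan 𝕜 s hx)
  obtain ⟨t, ht_mem, ht_neg⟩ :=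
    ((line_mem.filter_mono nhdsWithin_le_nhds).and (self_mem_nhdsWithin (s := Iio 0))).exists
  have h_past : t * (f x - f y) ≤ 0 := by
    simpa [AffineMap.apply_lineMap, AffineMap.lineMap_apply] using hf ht_mem
  have h_ge : 0 ≤ f x - f y := nonneg_of_mul_nonpos_right h_past ht_neg
  exact le_antisymm (hf hx) (sub_nonneg.1 h_ge)

end IntrinsicInterior

section NegDual

variable {C : Set V} {p : V →L[ℝ] ℝ} {w : V}

lemma apply_neg_of_mem_intrinsicInterior (hp : p ∈ negDual C) (hpz : ∃ u ∈ C, p u ≠ 0)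
    (hw : w ∈ intrinsicInterior ℝ C) : p w < 0 := by
  obtain ⟨u, hu, hpu⟩ := hpz
  refine (hp w (intrinsicInterior_subset hw)).lt_of_ne fun hpw ↦ hpu ?_
  have hmax : IsMaxOn p.toLinearMap.toAffineMap C w := fun v hv ↦ by simpa [hpw] using hp v hv
  simpa [hpw] using eq_of_isMaxOn_of_mem_intrinsicInterior hmax hw hu

end NegDual

namespace IsAntinorm

variable {C : Set V} {a : V → EReal} {p : V →L[ℝ] ℝ} {u v w : V} {r t c : ℝ}

lemma nonneg_iff_mem (ha : IsAntinorm C a) : 0 ≤ a v ↔ v ∈ C := by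
  obtain ⟨-, pos_ri, zero_rb, bot_off, -, -⟩ := ha
  refine ⟨fun h ↦ by_contra fun hv ↦ ?_, fun hv ↦ ?_⟩
  · simp [bot_off v hv] at h
  · by_cases hri : v ∈ intrinsicInterior ℝ C
    · exact (pos_ri v hri).le
    · exact (zero_rb v ⟨hv, hri⟩).ge

lemma pos_iff_mem_intrinsicInterior (ha : IsAntinorm C a) :
    0 < a v ↔ v ∈ intrinsicInterior ℝ C := by
  refine ⟨fun h ↦ by_contra fun hri ↦ ?_, ha.2.1 v⟩
  exact h.ne' (ha.2.2.1 v ⟨ha.nonneg_iff_mem.1 h.le, hri⟩)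

lemma mem_of_mem_antisphere (ha : IsAntinorm C a) (hr : 0 ≤ r) (hv : v ∈ antisphere a r) :
    v ∈ C :=
  ha.nonneg_iff_mem.1 (hv.symm ▸ EReal.coe_nonneg.2 hr)

lemma smul_mem_antisphere (ha : IsAntinorm C a) (hc : 0 < c) (hv : v ∈ antisphere a r) :
    c • v ∈ antisphere a (c * r) := by
  obtain ⟨-, -, -, -, homogeneous, -⟩ := ha
  change a (c • v) = ((c * r : ℝ) : EReal)
  rw [homogeneous c hc v, show a v = r from hv, EReal.coe_mul]

lemma exists_add_mem_antisphere (ha : IsAntinorm C a) (hu : u ∈ antisphere a r)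
    (hv : v ∈ antisphere a t) : ∃ q, r + t ≤ q ∧ u + v ∈ antisphere a q := by
  obtain ⟨ne_top, -, -, -, -, superadditive⟩ := ha
  have hle : ((r + t : ℝ) : EReal) ≤ a (u + v) := by
    simpa [show a u = r from hu, show a v = t from hv] using superadditive u v
  have hcoe : ((a (u + v)).toReal : EReal) = a (u + v) :=
    EReal.coe_toReal (ne_top _) (ne_bot_of_le_ne_bot (EReal.coe_ne_bot _) hle)
  exact ⟨(a (u + v)).toReal, EReal.coe_le_coe_iff.1 (hcoe ▸ hle), hcoe.symm⟩

lemma apply_nonneg_of_mem_maxSet_zero (ha : IsAntinorm C a) (hu : u ∈ maxSet a p 0) :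
    0 ≤ p u := by
  have half_mem : (1 / 2 : ℝ) • u ∈ antisphere a 0 := by
    simpa using ha.smul_mem_antisphere (c := 1 / 2) (by norm_num) hu.1
  have half_le : 1 / 2 * p u ≤ p u := by simpa using hu.2 _ half_mem
  linarith

lemma mul_apply_le_of_mem_maxSet (ha : IsAntinorm C a) (hp : p ∈ negDual C) (hr : 0 ≤ r)
    (hu : u ∈ maxSet a p r) (ht : 0 ≤ t) (hw : w ∈ antisphere a t) : r * p w ≤ t * p u := by
  rcases hr.eq_or_lt with rfl | hr_pos
  · simpa using mul_nonneg ht (ha.apply_nonneg_of_mem_maxSet_zero hu)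
  rcases ht.eq_or_lt with rfl | ht_pos
  · simpa using mul_nonpos_of_nonneg_of_nonpos hr (hp w (ha.mem_of_mem_antisphere le_rfl hw))
  have rescaled_mem : (r / t) • w ∈ antisphere a r := by
    simpa [ht_pos.ne'] using ha.smul_mem_antisphere (div_pos hr_pos ht_pos) hw
  have rescaled_le : r / t * p w ≤ p u := by simpa using hu.2 _ rescaled_mem
  rwa [div_mul_eq_mul_div, div_le_iff₀' ht_pos] at rescaled_le

end IsAntinorm

theorem statement6_general (C : Set V) (a : V → EReal) (ha : IsAntinorm C a)
    (p : V →L[ℝ] ℝ) (hp : p ∈ negDual C) (hpz : ∃ u ∈ C, p u ≠ 0) :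
    ∀ u ∈ pDual a p, ∀ v ∈ pDual a p, a (u + v) = a u + a v := by
  intro u hu v hv
  simp only [pDual, mem_iUnion, mem_Ici] at hu hv
  obtain ⟨r, hr, hu⟩ := hu
  obtain ⟨s, hs, hv⟩ := hv
  obtain ⟨t, hrst, huv⟩ := ha.exists_add_mem_antisphere hu.1 hv.1
  have ht : 0 ≤ t := (add_nonneg hr hs).trans hrst
  have htrs : t ≤ r + s := by
    rcases ht.eq_or_lt with rfl | ht_pos
    · exact add_nonneg hr hs
    have huv_ri : u + v ∈ intrinsicInterior ℝ C :=
      ha.pos_iff_mem_intrinsicInterior.1 (huv.symm ▸ EReal.coe_pos.2 ht_pos)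
    have hneg : p (u + v) < 0 := apply_neg_of_mem_intrinsicInterior hp hpz huv_ri
    refine (mul_le_mul_right_of_neg hneg).1 ?_
    calc (r + s) * p (u + v) = r * p (u + v) + s * p (u + v) := add_mul _ _ _
      _ ≤ t * p u + t * p v := add_le_add (ha.mul_apply_le_of_mem_maxSet hp hr hu ht huv)
          (ha.mul_apply_le_of_mem_maxSet hp hs hv ht huv)
      _ = t * p (u + v) := by rw [map_add, mul_add]
  rw [show a (u + v) = t from huv, show a u = r from hu.1, show a v = s from hv.1,
    ← EReal.coe_add, le_antisymm htrs hrst]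

/-- For a closed convex cone `C`, a continuous antinorm `a` associated with
`C`, and `p ∈ C^∨` not identically zero on `C`, the antinorm `a` is additive on the cone
`p^∨`. -/
theorem statement6 {V : Type*} [NormedAddCommGroup V] [NormedSpace ℝ V] [FiniteDimensional ℝ V]
    (C : Set V) (hC : IsClosedConvexCone C)
    (a : V → EReal) (ha : IsAntinorm C a) (hcont : ContinuousOn a C)
    (p : V →L[ℝ] ℝ) (hp : p ∈ negDual C) (hpz : ∃ u ∈ C, p u ≠ 0) :
    ∀ u ∈ pDual a p, ∀ v ∈ pDual a p, a (u + v) = a u + a v :=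
  statement6_general C a ha p hp hpz
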